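/- On the event E, under Condition (H), suppose the noise-stability bound (NS) holds at every iteration τ ≤ t. Then, for every iteration t ≤ T and every filter r ∈ [m], the signal coordinate is uniformly bounded: w_{r,1}^{(t)} ≤ 3·(log T)^{1/3}/α. -/

import Mathlib

open Finset MeasureTheory ProbabilityTheory
open scoped ENNReal NNReal

noncomputable section

namespace AD

/-- Cubic ReLU activation. -/
def phi (z : ℝ) : ℝ := (max 0 z) ^ 3

/-- Negative sigmoid `ψ(z) = 1/(1+e^z)`. -/
def psi (z : ℝ) : ℝ := 1 / (1 + Real.exp z)

/-- Logistic loss `ℓ(z) = log(1+e^{-z})`. -/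
def lloss (z : ℝ) : ℝ := Real.log (1 + Real.exp (-z))

/-- Logistic sigmoid `σ(z) = 1/(1+e^{-z})`. -/
def sigm (z : ℝ) : ℝ := 1 / (1 + Real.exp (-z))

/-- Euclidean inner product on `Fin d → ℝ`. -/
def dot {d : ℕ} (a b : Fin d → ℝ) : ℝ := ∑ k, a k * b k

/-- Squared Euclidean norm. -/
def sqnorm {d : ℕ} (a : Fin d → ℝ) : ℝ := dot a a

/-- First standard basis vector `e₁` (the learnable feature `u`). -/
def e1 (d : ℕ) (hd : 0 < d) : Fin d → ℝ := fun k => if k = (⟨0, hd⟩ : Fin d) then 1 else 0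

/-- Last standard basis vector `e_d` (the unlearnable feature `v`). -/
def eLast (d : ℕ) (_hd : 0 < d) : Fin d → ℝ := fun k => if (k : ℕ) = d - 1 then 1 else 0

/-- The two-layer student network
`f_W(X) = ∑_r ∑_p [φ(⟨w_r,x_p⟩) − φ(−⟨w_r,x_p⟩)]`. -/
def netOut {m P d : ℕ} (w : Fin m → Fin d → ℝ) (X : Fin P → Fin d → ℝ) : ℝ :=
  ∑ r, ∑ p, (phi (dot (w r) (X p)) - phi (-(dot (w r) (X p))))

/-- The concentration event `E` of the paper, i.e. properties (P1)–(P8), stated for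
training patches `x`, initialization `w0`, labels `y` and signal-patch indices `sig`. -/
def EventEOn (N m P d : ℕ) (hd : 0 < d) (sigman sigma0 delta : ℝ)
    (y : Fin N → ℝ) (sig : Fin N → Fin P)
    (x : Fin N → Fin P → Fin d → ℝ) (w0 : Fin m → Fin d → ℝ) : Prop :=
  -- (P1) noise-patch norms
  (∀ i j, j ≠ sig i →
      sigman ^ 2 * d / 2 ≤ sqnorm (x i j) ∧ sqnorm (x i j) ≤ 3 * sigman ^ 2 * d / 2) ∧
  -- (P2) pairwise noise inner products
  (∀ i k j q, j ≠ sig i → q ≠ sig k → ((i, j) : Fin N × Fin P) ≠ (k, q) →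
      |dot (x i j) (x k q)| ≤
        2 * sigman ^ 2 * Real.sqrt ((d : ℝ) * Real.log ((16 : ℝ) * N ^ 2 * P ^ 2 / delta))) ∧
  -- (P3) sup-norm of noise patches
  (∀ i j, j ≠ sig i → ∀ kk : Fin d,
      |x i j kk| ≤ sigman * Real.sqrt (2 * Real.log ((16 : ℝ) * d * N * P / delta))) ∧
  -- (P4) initialization norms
  (∀ r, Real.sqrt (sqnorm (w0 r)) ≤ 2 * sigma0 * Real.sqrt d) ∧
  -- (P5) initialization signal correlation
  (∀ r, |dot (w0 r) (e1 d hd)| ≤ sigma0 * Real.sqrt (2 * Real.log ((16 : ℝ) * m / delta))) ∧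
  -- (P6) initialization noise correlations
  (∀ r i j, j ≠ sig i →
      |dot (w0 r) (x i j)| ≤
        2 * sigma0 * sigman * Real.sqrt ((d : ℝ) * Real.log ((16 : ℝ) * N * m * P / delta))) ∧
  -- (P7) maximal initial signal alignment
  (∃ r, sigma0 / 2 ≤ dot (w0 r) (e1 d hd)) ∧
  -- (P8) maximal initial noise alignment
  (∀ i j, j ≠ sig i → ∃ r, sigma0 * sigman * Real.sqrt d / 4 ≤ y i * dot (w0 r) (x i j))
structure Setting where
  N : ℕ
  m : ℕ
  P : ℕ
  d : ℕ
  T : ℕ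
  hN : 0 < N
  hm : 0 < m
  hP : 0 < P
  hd : 0 < d
  alpha : ℝ
  sigman : ℝ
  sigma0 : ℝ
  eta : ℝ
  eps : ℝ
  delta : ℝ
  halpha : 0 < alpha
  hsigman : 0 < sigman
  hsigma0 : 0 < sigma0
  heta : 0 < eta
  heps : 0 < eps
  hepsalpha : eps < alpha
  hdelta0 : 0 < delta
  hdelta1 : delta < 1
  /-- labels -/
  y : Fin N → ℝ
  hy : ∀ i, y i = 1 ∨ y i = -1
  /-- signal patch index -/
  sig : Fin N → Fin P
  /-- learnable samples -/
  SL : Finset (Fin N)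
  /-- unlearnable samples -/
  SU : Finset (Fin N)
  hunion : SL ∪ SU = Finset.univ
  hdisj : Disjoint SL SU
  /-- training patches -/
  x : Fin N → Fin P → Fin d → ℝ
  hsigL : ∀ i ∈ SL, x i (sig i) = (alpha * y i) • e1 d hd
  hsigU : ∀ i ∈ SU, x i (sig i) = (alpha * y i) • eLast d hd
  hnoiseU : ∀ i j, j ≠ sig i → dot (x i j) (e1 d hd) = 0
  hnoiseV : ∀ i j, j ≠ sig i → dot (x i j) (eLast d hd) = 0
  /-- weight trajectory -/
  w : ℕ → Fin m → Fin d → ℝ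
  hwperp : ∀ t r, dot (w t r) (eLast d hd) = 0
  /-- adversarial training examples at each iteration -/
  xadv : ℕ → Fin N → Fin P → Fin d → ℝ
  hadvnoise : ∀ t i j, j ≠ sig i → xadv t i j = x i j
  hadvspan : ∀ t i, ∃ c : ℝ, xadv t i (sig i) - x i (sig i) = c • x i (sig i)
  hadvlinf : ∀ t i p k, |xadv t i p k - x i p k| ≤ eps
  hadvlearn : ∀ t : ℕ, ∀ i ∈ SL,
    alpha - eps ≤ y i * dot (xadv t i (sig i)) (e1 d hd) ∧
      y i * dot (xadv t i (sig i)) (e1 d hd) ≤ alpha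

namespace Setting

variable (S : Setting)

/-- Adversarial margin `y_i f_{W^{(t)}}(X̃_i^{(t)})`. -/
def marg (t : ℕ) (i : Fin S.N) : ℝ := S.y i * netOut (S.w t) (S.xadv t i)

/-- Signal coordinate `w_{r,1}^{(t)}`. -/
def wsig (t : ℕ) (r : Fin S.m) : ℝ := S.w t r ⟨0, S.hd⟩

/-- Unlearnable fraction `p_un = |S_U|/N`. -/
def pun : ℝ := (S.SU.card : ℝ) / S.N

/-- The adversarial-training gradient-descent dynamics. -/
def ATDyn : Prop :=
  ∀ t r, S.w (t + 1) r = S.w t r +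
    (3 * S.eta / S.N) •
      ∑ i : Fin S.N, (psi (S.marg t i) * S.y i) •
        ∑ p : Fin S.P, (dot (S.w t r) (S.xadv t i p)) ^ 2 • S.xadv t i p

/-- The signed gradient weight of sample `i` at iteration `t` under adversarial
distillation from teacher logits `fT`. -/
def gAD (fT : Fin S.N → ℝ) (t : ℕ) (i : Fin S.N) : ℝ :=
  sigm (S.y i * fT i) * psi (S.marg t i) - sigm (-(S.y i * fT i)) * psi (-(S.marg t i))

/-- The adversarial-distillation gradient-descent dynamics. -/
def ADDyn (fT : Fin S.N → ℝ) : Prop :=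
  ∀ t r, S.w (t + 1) r = S.w t r +
    (3 * S.eta / S.N) •
      ∑ i : Fin S.N, (S.gAD fT t i * S.y i) •
        ∑ p : Fin S.P, (dot (S.w t r) (S.xadv t i p)) ^ 2 • S.xadv t i p

/-- Noise coefficients `ρ_{i,j,r}^{(t)}` (adversarial training). -/
def rho (i : Fin S.N) (j : Fin S.P) (r : Fin S.m) : ℕ → ℝ
  | 0 => 0
  | t + 1 => rho i j r t + (3 * S.eta / S.N) * psi (S.marg t i) * (dot (S.w t r) (S.x i j)) ^ 2

/-- Noise coefficients under adversarial distillation. -/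
def rhoAD (fT : Fin S.N → ℝ) (i : Fin S.N) (j : Fin S.P) (r : Fin S.m) : ℕ → ℝ
  | 0 => 0
  | t + 1 => rhoAD fT i j r t + (3 * S.eta / S.N) * S.gAD fT t i * (dot (S.w t r) (S.x i j)) ^ 2

/-- The event `E` for a setting. -/
def EventE : Prop :=
  EventEOn S.N S.m S.P S.d S.hd S.sigman S.sigma0 S.delta S.y S.sig S.x (S.w 0)

/-- Condition (H): the parameter requirements of Condition 4.1 of the paper
(without the unlearnable-fraction regime item, which is imposed separately). -/
def CondH (C : ℝ) : Prop :=
  1 ≤ C ∧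
  -- training horizon
  C * S.N / (S.eta * S.sigma0 * S.sigman ^ 3 * ((S.d : ℝ) * Real.sqrt S.d)) ≤ (S.T : ℝ) ∧
  -- dimension
  C * S.m ^ 2 * S.P ^ 2 * S.N ^ 2 *
      (Real.log ((S.T : ℝ) * S.N * S.m * S.P / S.delta)) ^ 4 ≤ (S.d : ℝ) ∧
  -- signal strength
  C * S.sigman * Real.sqrt S.d * Real.log ((S.T : ℝ) * S.N * S.m * S.P / S.delta) /
      (((S.N : ℝ) * (1 - S.pun)) ^ ((1 : ℝ) / 3)) ≤ S.alpha ∧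
  -- initialization scale
  S.sigma0 ≤
    C⁻¹ *
        min (min (1 / ((S.m : ℝ) ^ ((2 : ℝ) / 3) * (S.P : ℝ) ^ ((2 : ℝ) / 3) *
            S.sigman * Real.sqrt S.d))
          (1 / (S.alpha * (S.m : ℝ) ^ ((2 : ℝ) / 3))))
          (1 / (S.sigman * S.m ^ 2 * Real.sqrt S.P * S.d)) /
      Real.log ((S.T : ℝ) * S.d * S.N * S.m * S.P / S.delta) ∧
  -- learning rate
  S.eta ≤
    C⁻¹ * min (min (1 / (S.alpha ^ 3 * S.sigma0)) (1 / (S.sigman ^ 2 * S.d))) (1 / S.alpha ^ 2) /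
      Real.log ((S.T : ℝ) * S.N * S.m * S.P / S.delta) ∧
  -- adversarial budget
  C * S.sigman * S.m * Real.sqrt S.P * Real.log ((S.T : ℝ) * S.d * S.N * S.P / S.delta) ≤ S.eps ∧
  S.eps < C⁻¹ * min S.alpha (1 / (S.m * S.sigma0 * S.d)) ∧
  -- width and number of patches
  C * Real.log ((S.N : ℝ) * S.P / S.delta) ≤ (S.m : ℝ) ∧
  (S.m : ℝ) ≤ C * Real.log S.d ^ C ∧
  2 ≤ S.P ∧ (S.P : ℝ) ≤ C

/-- The sparse-unlearnable regime of Condition 4.1. -/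
def SparseRegime (C : ℝ) : Prop :=
  C / S.N ≤ S.pun ∧ S.pun ≤ C⁻¹ * Real.log S.d / S.N ∧
  C * S.m * S.P * Real.log ((S.T : ℝ) * S.d * S.N * S.m * S.P / S.delta) ≤ (S.N : ℝ)

/-- The noise-stability bound (NS) on learnable samples at iteration `t`. -/
def NS (t : ℕ) : Prop :=
  ∀ r : Fin S.m, ∀ i ∈ S.SL, ∀ j, j ≠ S.sig i →
    |dot (S.w t r) (S.x i j)| ≤
      3 * S.sigma0 * S.sigman *
          Real.sqrt ((S.d : ℝ) * Real.log ((16 : ℝ) * S.N * S.m * S.P / S.delta)) +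
        21 * S.pun * S.N * S.P * Real.log S.T ^ ((1 : ℝ) / 3) / Real.sqrt S.d *
          Real.sqrt (Real.log ((16 : ℝ) * S.N ^ 2 * S.P ^ 2 / S.delta))

/-- The signal-learning hitting time `T₀`. -/
def T0 (C0 : ℝ) : ℕ :=
  sInf {t : ℕ | ∃ r, C0 / (S.alpha * (S.m : ℝ) ^ ((1 : ℝ) / 3)) < S.wsig t r}

/-- Maximum of the noise coefficients over unlearnable noise patches. -/
def rhoMaxSU (t : ℕ) : ℝ :=
  sSup {z : ℝ | ∃ r : Fin S.m, ∃ k ∈ S.SU, ∃ q, q ≠ S.sig k ∧ z = S.rho k q r t}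

/-- Shifted noise coefficients `ρ̂_{i,j,r}^{(t)}`. -/
def rhoHat (i : Fin S.N) (j : Fin S.P) (r : Fin S.m) (t : ℕ) : ℝ :=
  S.rho i j r t + S.y i * dot (S.w 0 r) (S.x i j) / sqnorm (S.x i j)

/-- Maximum shifted noise coefficient over unlearnable noise patches. -/
def rhoHatMax (t : ℕ) : ℝ :=
  sSup {z : ℝ | ∃ r : Fin S.m, ∃ k ∈ S.SU, ∃ q, q ≠ S.sig k ∧ z = S.rhoHat k q r t}

/-- The noise-memorization hitting time `T₁`. -/
def T1 (C1 : ℝ) : ℕ :=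
  sInf {t : ℕ | C1 / (((S.m : ℝ) * S.P) ^ ((1 : ℝ) / 3) * S.sigman ^ 2 * S.d) < S.rhoHatMax t}

/-- The Good-Teacher horizon `T_max`. -/
def Tmax : ℝ :=
  S.N / (1000 * S.eta * S.m * S.P * S.sigma0 ^ 4 * S.sigman ^ 6 * (S.d : ℝ) ^ 3 *
    Real.log ((16 : ℝ) * S.N * S.m * S.P / S.delta) ^ 2)

end Setting

/-!
Only learnable samples move the signal coordinates `w_{r,1}`, and each of them pushes upwards, so
these coordinates are nondecreasing and never fall below their negligible initial values. Put
`B = (log T)^{1/3} / α`. While `w_{r,1} ≤ 2B`, one step cannot overshoot `5B/2`, because the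
learning rate is small. Once `w_{r,1} > 2B`, its cubic contribution to the adversarial margin of
every learnable sample exceeds `5 log T` and dominates what the other filters and the noise patches
can subtract. The margin is then at least `log T`, so the logistic weight is at most `1/T` and a
step adds at most `B/(2T)`; over `T` steps the excess above `5B/2` is at most `B/2`.
-/

section Scalar

lemma phi_sub_phi_neg (z : ℝ) : phi z - phi (-z) = z ^ 3 := by
  unfold phi
  rcases le_total 0 z with h | h
  · rw [max_eq_right h, max_eq_left (neg_nonpos.2 h)]; ring
  · rw [max_eq_left h, max_eq_right (neg_nonneg.2 h)]; ring

lemma psi_pos (z : ℝ) : 0 < psi z := by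
  unfold psi; positivity

lemma psi_le_exp_neg (z : ℝ) : psi z ≤ Real.exp (-z) := by
  rw [psi, one_div, Real.exp_neg]
  exact inv_anti₀ (Real.exp_pos z) (le_add_of_nonneg_left zero_le_one)

lemma psi_le_inv_of_log_le {T z : ℝ} (hT : 0 < T) (hz : Real.log T ≤ z) : psi z ≤ T⁻¹ := calc
  psi z ≤ Real.exp (-z) := psi_le_exp_neg z
  _ ≤ Real.exp (-Real.log T) := by gcongr
  _ = T⁻¹ := by rw [Real.exp_neg, Real.exp_log hT]

lemma psi_le_one (z : ℝ) : psi z ≤ 1 := by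
  rw [psi, div_le_one (by positivity)]
  exact le_add_of_nonneg_right (Real.exp_pos z).le

lemma le_one_of_mul_pow_le_one {a z : ℝ} {n : ℕ} (ha : 1 ≤ a) (hz : 0 ≤ z) (hn : n ≠ 0)
    (h : a * z ^ n ≤ 1) : z ≤ 1 :=
  (pow_le_one_iff_of_nonneg hz hn).1 ((le_mul_of_one_le_left (pow_nonneg hz n) ha).trans h)

lemma rpow_two_thirds_cube {a : ℝ} (ha : 0 ≤ a) : (a ^ ((2 : ℝ) / 3)) ^ 3 = a ^ 2 := by
  rw [← Real.rpow_mul_natCast ha]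
  norm_num

lemma rpow_one_third_cube {a : ℝ} (ha : 0 ≤ a) : (a ^ ((1 : ℝ) / 3)) ^ 3 = a := by
  rw [← Real.rpow_mul_natCast ha]
  norm_num

lemma mul_cube_le_of_rpow_mul_le {a z k : ℝ} (ha : 1 ≤ a) (hz : 0 ≤ z)
    (h : a ^ ((2 : ℝ) / 3) * z ≤ k) : a * z ^ 3 ≤ k ^ 3 := by
  calc a * z ^ 3 ≤ a ^ 2 * z ^ 3 := by gcongr; exact le_self_pow₀ ha two_ne_zero
    _ = (a ^ ((2 : ℝ) / 3) * z) ^ 3 := by rw [mul_pow, rpow_two_thirds_cube (by positivity)]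
    _ ≤ k ^ 3 := by gcongr

lemma sqrt_le_mul_of_le_sq_mul {x k l : ℝ} (hk : 0 ≤ k) (hl : 1 ≤ l) (hx : x ≤ k ^ 2 * l) :
    √x ≤ k * l := by
  refine Real.sqrt_le_iff.2 ⟨by positivity, hx.trans ?_⟩
  rw [mul_pow]
  gcongr
  exact le_self_pow₀ hl two_ne_zero

lemma mul_mul_le_of_le_mul_div {x k M a l l' : ℝ} (hk : 0 ≤ k) (ha : 0 < a) (hl : 0 < l)
    (hll' : l ≤ l') (hM : M ≤ 1 / a) (hx : x ≤ k * M / l') : x * a * l ≤ k := by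
  have hx' : x ≤ k * (1 / a) / l := calc
    x ≤ k * (1 / a) / l' := hx.trans (by have := hl.trans_le hll'; gcongr)
    _ ≤ k * (1 / a) / l := by gcongr
  calc x * a * l ≤ k * (1 / a) / l * a * l := by gcongr
    _ = k := by field_simp

end Scalar

section Sums

variable {ι : Type*}

lemma sub_card_mul_le_sum [Fintype ι] {f : ι → ℝ} {κ : ℝ} (hκ : 0 ≤ κ) (hf : ∀ i, -κ ≤ f i)
    (i : ι) : f i - Fintype.card ι * κ ≤ ∑ k, f k := by
  have hle : f i + κ ≤ ∑ k, (f k + κ) :=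
    Finset.single_le_sum (f := fun k => f k + κ) (fun k _ => neg_le_iff_add_nonneg.1 (hf k))
      (Finset.mem_univ i)
  rw [Finset.sum_add_distrib, Finset.sum_const, Finset.card_univ, nsmul_eq_mul] at hle
  linarith

lemma abs_sum_pow_le_card_mul {s : Finset ι} {f : ι → ℝ} {b : ℝ} (hf : ∀ i ∈ s, |f i| ≤ b)
    (n : ℕ) : |∑ i ∈ s, f i ^ n| ≤ #s * b ^ n := by
  calc |∑ i ∈ s, f i ^ n| ≤ ∑ i ∈ s, |f i ^ n| := Finset.abs_sum_le_sum_abs _ _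
    _ ≤ #s • b ^ n := Finset.sum_le_card_nsmul _ _ _ fun i hi => by
        rw [abs_pow]
        exact pow_le_pow_left₀ (abs_nonneg _) (hf i hi) n
    _ = #s * b ^ n := nsmul_eq_mul _ _

lemma le_add_mul_of_threshold {a : ℕ → ℝ} {θ M ε : ℝ} {t : ℕ} (hε : 0 ≤ ε) (h0 : a 0 ≤ M)
    (hsmall : ∀ τ < t, a τ ≤ θ → a (τ + 1) ≤ M)
    (hlarge : ∀ τ < t, θ < a τ → a τ ≤ M + τ * ε → a (τ + 1) ≤ a τ + ε) :
    ∀ τ ≤ t, a τ ≤ M + τ * ε := by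
  intro τ
  induction τ with
  | zero => exact fun _ => by simpa using h0
  | succ τ ih =>
    intro hτ
    rcases le_or_gt (a τ) θ with hle | hgt
    · exact (hsmall τ hτ hle).trans (le_add_of_nonneg_right (by positivity))
    · have hprev := ih (Nat.le_of_succ_le hτ)
      push_cast
      linarith [hlarge τ hτ hgt hprev]

end Sums

section Network

variable {m P d : ℕ}

lemma dot_smul_right (a b : Fin d → ℝ) (c : ℝ) : dot a (c • b) = c * dot a b :=
  dotProduct_smul c a b

lemma dot_e1 (hd : 0 < d) (a : Fin d → ℝ) : dot a (e1 d hd) = a ⟨0, hd⟩ := by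
  simp [dot, e1]

lemma e1_apply_zero (hd : 0 < d) : e1 d hd ⟨0, hd⟩ = 1 := if_pos rfl

lemma netOut_eq_sum_cube (w : Fin m → Fin d → ℝ) (X : Fin P → Fin d → ℝ) :
    netOut w X = ∑ r, ∑ p, dot (w r) (X p) ^ 3 := by
  simp only [netOut, phi_sub_phi_neg]

end Network

namespace Setting

section Dynamics

variable (S : Setting)

/-- Strength of the adversarial signal patch of sample `i` along `u`, signed by the label;
for learnable samples it lies in `[α - ε, α]`. -/
def advSignal (t : ℕ) (i : Fin S.N) : ℝ := S.y i * dot (S.xadv t i (S.sig i)) (e1 S.d S.hd)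

variable {S} {t : ℕ} {i : Fin S.N} {r : Fin S.m}

lemma y_mul_self (i : Fin S.N) : S.y i * S.y i = 1 := mul_self_eq_one_iff.2 (S.hy i)

lemma abs_y (i : Fin S.N) : |S.y i| = 1 := (abs_eq zero_le_one).2 (S.hy i)

lemma advSignal_pos (hi : i ∈ S.SL) : 0 < S.advSignal t i :=
  (sub_pos.2 S.hepsalpha).trans_le (S.hadvlearn t i hi).1

lemma advSignal_le (hi : i ∈ S.SL) : S.advSignal t i ≤ S.alpha := (S.hadvlearn t i hi).2

lemma xadv_sig_eq_smul (t : ℕ) (i : Fin S.N) :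
    ∃ c : ℝ, S.xadv t i (S.sig i) = c • S.x i (S.sig i) := by
  obtain ⟨c, hc⟩ := S.hadvspan t i
  exact ⟨c + 1, by rw [add_smul, one_smul, ← hc, sub_add_cancel]⟩

lemma xadv_sig_of_mem_SL (hi : i ∈ S.SL) :
    S.xadv t i (S.sig i) = (S.y i * S.advSignal t i) • e1 S.d S.hd := by
  obtain ⟨c, hc⟩ := S.xadv_sig_eq_smul t i
  rw [advSignal, ← mul_assoc, y_mul_self, one_mul, dot_e1, hc, S.hsigL i hi, smul_smul,
    Pi.smul_apply, e1_apply_zero, smul_eq_mul, mul_one]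

lemma dot_w_xadv_sig_of_mem_SL (hi : i ∈ S.SL) :
    dot (S.w t r) (S.xadv t i (S.sig i)) = S.y i * (S.wsig t r * S.advSignal t i) := by
  rw [xadv_sig_of_mem_SL hi, dot_smul_right, dot_e1, wsig]
  ring

lemma dot_w_xadv_sig_of_mem_SU (hi : i ∈ S.SU) : dot (S.w t r) (S.xadv t i (S.sig i)) = 0 := by
  obtain ⟨c, hc⟩ := S.xadv_sig_eq_smul t i
  rw [hc, S.hsigU i hi, dot_smul_right, dot_smul_right, S.hwperp, mul_zero, mul_zero]

lemma xadv_noise_apply_zero {j : Fin S.P} (hj : j ≠ S.sig i) : S.xadv t i j ⟨0, S.hd⟩ = 0 := by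
  rw [S.hadvnoise t i j hj, ← dot_e1 S.hd (S.x i j)]
  exact S.hnoiseU i j hj

lemma sum_sq_smul_xadv_apply_zero :
    (∑ p, (dot (S.w t r) (S.xadv t i p)) ^ 2 • S.xadv t i p) ⟨0, S.hd⟩ =
      dot (S.w t r) (S.xadv t i (S.sig i)) ^ 2 * S.xadv t i (S.sig i) ⟨0, S.hd⟩ := by
  rw [Finset.sum_apply, Finset.sum_eq_single_of_mem (S.sig i) (Finset.mem_univ _)]
  · rfl
  · intro j _ hj
    rw [Pi.smul_apply, xadv_noise_apply_zero hj, smul_zero]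

lemma wsig_succ (hdyn : S.ATDyn) (t : ℕ) (r : Fin S.m) :
    S.wsig (t + 1) r = S.wsig t r + 3 * S.eta / S.N *
      ∑ i ∈ S.SL, psi (S.marg t i) * (S.wsig t r ^ 2 * S.advSignal t i ^ 3) := by
  have hcoord : S.wsig (t + 1) r = S.wsig t r + 3 * S.eta / S.N *
      ∑ i, psi (S.marg t i) * S.y i * (dot (S.w t r) (S.xadv t i (S.sig i)) ^ 2 *
        S.xadv t i (S.sig i) ⟨0, S.hd⟩) := by
    simp only [wsig, hdyn t r, Pi.add_apply, Pi.smul_apply, Finset.sum_apply, smul_eq_mul,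
      ← sum_sq_smul_xadv_apply_zero]
  have hunlearnable : ∀ i ∈ S.SU, psi (S.marg t i) * S.y i *
      (dot (S.w t r) (S.xadv t i (S.sig i)) ^ 2 * S.xadv t i (S.sig i) ⟨0, S.hd⟩) = 0 := by
    intro i hi
    rw [dot_w_xadv_sig_of_mem_SU hi]
    ring
  have hlearnable : ∀ i ∈ S.SL, psi (S.marg t i) * S.y i *
      (dot (S.w t r) (S.xadv t i (S.sig i)) ^ 2 * S.xadv t i (S.sig i) ⟨0, S.hd⟩) =
      psi (S.marg t i) * (S.wsig t r ^ 2 * S.advSignal t i ^ 3) := by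
    intro i hi
    rw [dot_w_xadv_sig_of_mem_SL hi, xadv_sig_of_mem_SL hi, Pi.smul_apply, e1_apply_zero,
      smul_eq_mul]
    linear_combination (psi (S.marg t i) * S.wsig t r ^ 2 * S.advSignal t i ^ 3 *
      (S.y i * S.y i + 1)) * y_mul_self i
  rw [hcoord, ← S.hunion, Finset.sum_union S.hdisj, Finset.sum_eq_zero hunlearnable, add_zero,
    Finset.sum_congr rfl hlearnable]

lemma monotone_wsig (hdyn : S.ATDyn) (r : Fin S.m) : Monotone fun t => S.wsig t r := by
  refine monotone_nat_of_le_succ fun t => ?_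
  have hsum : 0 ≤ ∑ i ∈ S.SL, psi (S.marg t i) * (S.wsig t r ^ 2 * S.advSignal t i ^ 3) :=
    Finset.sum_nonneg fun i hi => by
      have := psi_pos (S.marg t i)
      have := advSignal_pos (t := t) hi
      positivity
  have := S.heta
  rw [wsig_succ hdyn]
  exact le_add_of_nonneg_right (by positivity)

lemma wsig_succ_le (hdyn : S.ATDyn) {q : ℝ} (hq0 : 0 ≤ q)
    (hq : ∀ i ∈ S.SL, psi (S.marg t i) ≤ q) :
    S.wsig (t + 1) r ≤ S.wsig t r + 3 * S.eta * q * S.wsig t r ^ 2 * S.alpha ^ 3 := by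
  have hN : (0 : ℝ) < S.N := Nat.cast_pos.2 S.hN
  have := S.halpha
  have := S.heta
  have hsum : ∑ i ∈ S.SL, psi (S.marg t i) * (S.wsig t r ^ 2 * S.advSignal t i ^ 3) ≤
      S.N * (q * (S.wsig t r ^ 2 * S.alpha ^ 3)) := calc
    _ ≤ #S.SL • (q * (S.wsig t r ^ 2 * S.alpha ^ 3)) :=
        Finset.sum_le_card_nsmul _ _ _ fun i hi => by
          have := (advSignal_pos (t := t) hi).le
          have := advSignal_le (t := t) hi
          have := hq i hi
          gcongr
    _ = #S.SL * (q * (S.wsig t r ^ 2 * S.alpha ^ 3)) := nsmul_eq_mul _ _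
    _ ≤ _ := by
        gcongr
        exact card_finset_fin_le S.SL
  rw [wsig_succ hdyn]
  calc _ ≤ S.wsig t r + 3 * S.eta / S.N * (S.N * (q * (S.wsig t r ^ 2 * S.alpha ^ 3))) := by
        gcongr
    _ = _ := by field_simp

lemma marg_of_mem_SL (hi : i ∈ S.SL) :
    S.marg t i = ∑ r, (S.wsig t r * S.advSignal t i) ^ 3 +
      S.y i * ∑ r, ∑ p ∈ Finset.univ.erase (S.sig i), dot (S.w t r) (S.x i p) ^ 3 := by
  have hsignal : ∀ r, S.y i * dot (S.w t r) (S.xadv t i (S.sig i)) ^ 3 =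
      (S.wsig t r * S.advSignal t i) ^ 3 := by
    intro r
    rw [dot_w_xadv_sig_of_mem_SL hi]
    linear_combination ((S.wsig t r * S.advSignal t i) ^ 3 * (S.y i * S.y i + 1)) * y_mul_self i
  have hnoise : ∀ r, ∑ p ∈ Finset.univ.erase (S.sig i), dot (S.w t r) (S.xadv t i p) ^ 3 =
      ∑ p ∈ Finset.univ.erase (S.sig i), dot (S.w t r) (S.x i p) ^ 3 := fun r =>
    Finset.sum_congr rfl fun p hp => by rw [S.hadvnoise t i p (Finset.ne_of_mem_erase hp)]
  simp only [marg, netOut_eq_sum_cube, ← Finset.add_sum_erase _ _ (Finset.mem_univ (S.sig i)),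
    Finset.sum_add_distrib, mul_add, Finset.mul_sum, hsignal, ← hnoise]

lemma abs_sum_noise_cube_le {b : ℝ} (hb0 : 0 ≤ b)
    (hb : ∀ r, ∀ j ≠ S.sig i, |dot (S.w t r) (S.x i j)| ≤ b) :
    |∑ r, ∑ p ∈ Finset.univ.erase (S.sig i), dot (S.w t r) (S.x i p) ^ 3| ≤
      S.m * S.P * b ^ 3 := by
  rw [← Finset.sum_product']
  refine (abs_sum_pow_le_card_mul (fun rp hrp => hb rp.1 rp.2
    (Finset.ne_of_mem_erase (Finset.mem_product.1 hrp).2)) 3).trans ?_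
  gcongr
  rw [Finset.card_product, Finset.card_univ, Fintype.card_fin]
  exact_mod_cast Nat.mul_le_mul_left S.m (card_finset_fin_le _)

lemma le_marg_of_mem_SL (hi : i ∈ S.SL) {A b : ℝ} (hA0 : 0 ≤ A) (hb0 : 0 ≤ b)
    (hA : ∀ r, -A ≤ S.wsig t r) (hb : ∀ r, ∀ j ≠ S.sig i, |dot (S.w t r) (S.x i j)| ≤ b)
    (r : Fin S.m) :
    (S.wsig t r * S.advSignal t i) ^ 3 - S.m * (A * S.alpha) ^ 3 - S.m * S.P * b ^ 3 ≤
      S.marg t i := by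
  have := S.halpha
  have hcube : ∀ r', -(A * S.alpha) ^ 3 ≤ (S.wsig t r' * S.advSignal t i) ^ 3 := by
    intro r'
    rw [← Odd.neg_pow (by decide), Odd.pow_le_pow (by decide)]
    nlinarith [hA r', advSignal_pos (t := t) hi, advSignal_le (t := t) hi]
  have hsignal := sub_card_mul_le_sum (by positivity) hcube r
  rw [Fintype.card_fin] at hsignal
  have hnoise := neg_abs_le (S.y i *
    ∑ r, ∑ p ∈ Finset.univ.erase (S.sig i), dot (S.w t r) (S.x i p) ^ 3)
  rw [abs_mul, abs_y, one_mul] at hnoise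
  rw [marg_of_mem_SL hi]
  linarith [abs_sum_noise_cube_le hb0 hb]

end Dynamics

section Saturation

variable {S : Setting} {t : ℕ} {r : Fin S.m} {A b c : ℝ}

lemma cube_le_marg (hc : 1 ≤ c) (hε : S.eps ≤ S.alpha / 10) (hA0 : 0 ≤ A)
    (hA : S.m * (A * S.alpha) ^ 3 ≤ 1) (hw : ∀ r, -A ≤ S.wsig t r) (hb0 : 0 ≤ b)
    (hb : S.m * S.P * b ^ 3 ≤ 3 * c ^ 3) {i : Fin S.N} (hi : i ∈ S.SL)
    (hnoise : ∀ r, ∀ j ≠ S.sig i, |dot (S.w t r) (S.x i j)| ≤ b)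
    (hr : 2 * (c / S.alpha) ≤ S.wsig t r) : c ^ 3 ≤ S.marg t i := by
  have hα := S.halpha
  have hadv : 9 / 10 * S.alpha ≤ S.advSignal t i :=
    le_trans (by linarith) (S.hadvlearn t i hi).1
  have hsignal : 5 * c ^ 3 ≤ (S.wsig t r * S.advSignal t i) ^ 3 := calc
    5 * c ^ 3 ≤ (9 / 5 * c) ^ 3 := by
        rw [mul_pow]
        gcongr
        norm_num
    _ = (2 * (c / S.alpha) * (9 / 10 * S.alpha)) ^ 3 := by field_simp; ring
    _ ≤ _ := by
        have : 0 ≤ 2 * (c / S.alpha) := by positivity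
        gcongr
        exact this.trans hr
  linarith [le_marg_of_mem_SL hi hA0 hb0 hw hnoise r, one_le_pow₀ hc (n := 3)]

lemma wsig_succ_le_add_of_abs_le (hdyn : S.ATDyn) (hc : 0 ≤ c)
    (hη : S.eta * S.alpha ^ 2 * c ≤ 1 / 100) {k q : ℝ} (hk : |S.wsig t r| ≤ k * (c / S.alpha))
    (hq0 : 0 ≤ q) (hq : ∀ i ∈ S.SL, psi (S.marg t i) ≤ q) :
    S.wsig (t + 1) r ≤ S.wsig t r + 3 / 100 * k ^ 2 * q * (c / S.alpha) := by
  have hα := S.halpha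
  have := S.heta
  have hsq : S.wsig t r ^ 2 ≤ (k * (c / S.alpha)) ^ 2 := sq_le_sq.2 (hk.trans (le_abs_self _))
  refine (wsig_succ_le hdyn hq0 hq).trans (add_le_add_right ?_ _)
  calc 3 * S.eta * q * S.wsig t r ^ 2 * S.alpha ^ 3
      ≤ 3 * S.eta * q * (k * (c / S.alpha)) ^ 2 * S.alpha ^ 3 := by gcongr
    _ = 3 * (S.eta * S.alpha ^ 2 * c) * k ^ 2 * q * (c / S.alpha) := by field_simp
    _ ≤ 3 * (1 / 100) * k ^ 2 * q * (c / S.alpha) := by gcongr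
    _ = _ := by ring

theorem wsig_le_of_abs_noise_le (hdyn : S.ATDyn) (hc : 1 ≤ c) (hcT : c ^ 3 = Real.log S.T)
    (hη : S.eta * S.alpha ^ 2 * c ≤ 1 / 100) (hε : S.eps ≤ S.alpha / 10)
    (hA : S.m * (A * S.alpha) ^ 3 ≤ 1) (hw0 : ∀ r, |S.wsig 0 r| ≤ A) (hb0 : 0 ≤ b)
    (hb : S.m * S.P * b ^ 3 ≤ 3 * c ^ 3) (ht : t ≤ S.T)
    (hnoise : ∀ τ < t, ∀ r, ∀ i ∈ S.SL, ∀ j, j ≠ S.sig i → |dot (S.w τ r) (S.x i j)| ≤ b)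
    (r : Fin S.m) : S.wsig t r ≤ 3 * (c / S.alpha) := by
  have hα := S.halpha
  have hA0 : 0 ≤ A := (abs_nonneg _).trans (hw0 r)
  have hT : (0 : ℝ) < S.T := by
    have : Real.log S.T ≠ 0 := by rw [← hcT]; positivity
    exact (Nat.cast_nonneg _).lt_of_ne fun h => this (by rw [← h, Real.log_zero])
  have hw : ∀ τ r, -A ≤ S.wsig τ r := fun τ r =>
    (neg_le_of_abs_le (hw0 r)).trans (monotone_wsig hdyn r τ.zero_le)
  set B := c / S.alpha
  have hAB : A ≤ B := (le_div_iff₀ hα).2 ((le_one_of_mul_pow_le_one (Nat.one_le_cast.2 S.hm)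
    (by positivity) three_ne_zero hA).trans hc)
  have hdrift : ∀ τ ≤ t, τ * (B / (2 * S.T)) ≤ 1 / 2 * B := fun τ hτ => calc
    τ * (B / (2 * S.T)) ≤ S.T * (B / (2 * S.T)) := by gcongr; exact hτ.trans ht
    _ = 1 / 2 * B := by field_simp
  have hbound := le_add_mul_of_threshold (a := fun τ => S.wsig τ r) (θ := 2 * B)
    (M := 5 / 2 * B) (ε := B / (2 * S.T)) (t := t) (by positivity)
    (by linarith [le_of_abs_le (hw0 r)]) ?small ?large t le_rfl
  · linarith [hdrift t le_rfl]
  case small =>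
    intro τ _ hle
    have habs : |S.wsig τ r| ≤ 2 * B := abs_le.2 ⟨by linarith [hw τ r], hle⟩
    linarith [wsig_succ_le_add_of_abs_le hdyn (by positivity) hη habs zero_le_one
      fun i _ => psi_le_one (S.marg τ i)]
  case large =>
    intro τ hτ hlt hle
    have hpsi : ∀ i ∈ S.SL, psi (S.marg τ i) ≤ (S.T : ℝ)⁻¹ := fun i hi =>
      psi_le_inv_of_log_le hT (hcT ▸ cube_le_marg hc hε hA0 hA (hw τ) hb0 hb hi
        (fun r j => hnoise τ hτ r i hi j) hlt.le)
    have habs : |S.wsig τ r| ≤ 3 * B := abs_le.2 ⟨by linarith, by linarith [hdrift τ hτ.le]⟩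
    refine (wsig_succ_le_add_of_abs_le hdyn (by positivity) hη habs (by positivity) hpsi).trans
      (add_le_add_right ?_ _)
    calc 3 / 100 * 3 ^ 2 * (S.T : ℝ)⁻¹ * B ≤ 1 / 2 * (S.T : ℝ)⁻¹ * B := by gcongr; norm_num
      _ = B / (2 * S.T) := by field_simp

end Saturation

section Parameters

variable (S : Setting)

/-- `T N m P / δ`, whose logarithm is the logarithmic factor of Condition (H). -/
def unionRatio : ℝ := (S.T : ℝ) * S.N * S.m * S.P / S.delta

/-- The bound of (P5) on the initial signal coordinates. -/
def initSignalBound : ℝ := S.sigma0 * √(2 * Real.log ((16 : ℝ) * S.m / S.delta))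

/-- The first summand of the noise-stability bound, due to the initialization. -/
def initNoiseBound : ℝ :=
  3 * S.sigma0 * S.sigman * √((S.d : ℝ) * Real.log ((16 : ℝ) * S.N * S.m * S.P / S.delta))

/-- The second summand of the noise-stability bound, due to memorized unlearnable samples. -/
def memorizedNoiseBound : ℝ :=
  21 * S.pun * S.N * S.P * Real.log S.T ^ ((1 : ℝ) / 3) / √S.d *
    √(Real.log ((16 : ℝ) * S.N ^ 2 * S.P ^ 2 / S.delta))

variable {S}

lemma pun_nonneg : 0 ≤ S.pun := by
  unfold pun; positivity

lemma pun_mul_N_le : S.pun * S.N ≤ S.N := by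
  rw [pun, div_mul_cancel₀ _ (Nat.cast_ne_zero.2 S.hN.ne')]
  exact_mod_cast card_finset_fin_le S.SU

lemma initNoiseBound_nonneg : 0 ≤ S.initNoiseBound := by
  have := S.hsigma0
  have := S.hsigman
  unfold initNoiseBound
  positivity

lemma memorizedNoiseBound_nonneg : 0 ≤ S.memorizedNoiseBound := by
  have := S.pun_nonneg
  unfold memorizedNoiseBound
  positivity

lemma natCast_div_delta_le_unionRatio {k : ℕ} (hk : k ≤ S.T * S.N * S.m * S.P) :
    k / S.delta ≤ S.unionRatio := by
  have := S.hdelta0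
  unfold unionRatio
  gcongr
  exact_mod_cast hk

lemma natCast_le_unionRatio {k : ℕ} (hk : k ≤ S.T * S.N * S.m * S.P) : k ≤ S.unionRatio :=
  (le_div_self k.cast_nonneg S.hdelta0 S.hdelta1.le).trans (natCast_div_delta_le_unionRatio hk)

end Parameters

namespace CondH

variable {S : Setting} {C : ℝ}

lemma const_pos (h : S.CondH C) : 0 < C := zero_lt_one.trans_le h.1

lemma T_pos (h : S.CondH C) : 0 < S.T := by
  have := h.const_pos
  have := S.heta
  have := S.hsigma0
  have := S.hsigman
  have : (0 : ℝ) < S.N := Nat.cast_pos.2 S.hN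
  have : (0 : ℝ) < S.d := Nat.cast_pos.2 S.hd
  exact Nat.cast_pos.1 (lt_of_lt_of_le (by positivity) h.2.1)

lemma two_le_P (h : S.CondH C) : 2 ≤ S.P := h.2.2.2.2.2.2.2.2.2.2.1

lemma P_le (h : S.CondH C) : (S.P : ℝ) ≤ C := h.2.2.2.2.2.2.2.2.2.2.2

lemma mul_le_T_mul (h : S.CondH C) : S.N * S.m * S.P ≤ S.T * S.N * S.m * S.P := by
  simpa only [mul_assoc] using Nat.le_mul_of_pos_left (S.N * (S.m * S.P)) h.T_pos

lemma two_le_unionRatio (h : S.CondH C) : 2 ≤ S.unionRatio := by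
  refine natCast_le_unionRatio (k := 2) (le_trans ?_ h.mul_le_T_mul)
  exact h.two_le_P.trans (Nat.le_mul_of_pos_left _ (Nat.mul_pos S.hN S.hm))

lemma half_le_log_unionRatio (h : S.CondH C) : 1 / 2 ≤ Real.log S.unionRatio := by
  linarith [Real.log_two_gt_d9, Real.log_le_log two_pos h.two_le_unionRatio]

lemma log_T_le (h : S.CondH C) : Real.log S.T ≤ Real.log S.unionRatio := by
  refine Real.log_le_log (Nat.cast_pos.2 h.T_pos) (natCast_le_unionRatio ?_)
  simpa only [mul_assoc] using
    Nat.le_mul_of_pos_right S.T (Nat.mul_pos S.hN (Nat.mul_pos S.hm S.hP))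

lemma log_unionRatio_le (h : S.CondH C) : Real.log S.unionRatio ≤
    Real.log ((S.T : ℝ) * S.d * S.N * S.m * S.P / S.delta) := by
  have := S.hdelta0
  refine Real.log_le_log (two_pos.trans_le h.two_le_unionRatio) ?_
  unfold unionRatio
  gcongr
  exact le_mul_of_one_le_right (by positivity) (Nat.one_le_cast.2 S.hd)

lemma log_sixteen_mul_le (h : S.CondH C) {a : ℝ} {n : ℕ} (ha : 0 < a)
    (han : a ≤ S.unionRatio ^ n) : Real.log (16 * a) ≤ (4 + n) * Real.log S.unionRatio := by
  have h16 : (16 : ℝ) ≤ S.unionRatio ^ 4 := calc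
    (16 : ℝ) = 2 ^ 4 := by norm_num
    _ ≤ _ := by gcongr; exact h.two_le_unionRatio
  calc Real.log (16 * a) ≤ Real.log (S.unionRatio ^ 4 * S.unionRatio ^ n) :=
        Real.log_le_log (by positivity) (by gcongr)
    _ = _ := by rw [← pow_add, Real.log_pow]; push_cast; ring

lemma log_initNoise_le (h : S.CondH C) :
    Real.log ((16 : ℝ) * S.N * S.m * S.P / S.delta) ≤ 5 * Real.log S.unionRatio := by
  have hpos : 0 < ((S.N * S.m * S.P : ℕ) : ℝ) / S.delta :=
    div_pos (Nat.cast_pos.2 (Nat.mul_pos (Nat.mul_pos S.hN S.hm) S.hP)) S.hdelta0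
  have hle := h.log_sixteen_mul_le (n := 1) hpos
    (by rw [pow_one]; exact natCast_div_delta_le_unionRatio h.mul_le_T_mul)
  convert hle using 2 <;> push_cast <;> ring

lemma log_initSignal_le (h : S.CondH C) :
    Real.log ((16 : ℝ) * S.m / S.delta) ≤ 5 * Real.log S.unionRatio := by
  have : (0 : ℝ) < S.m := Nat.cast_pos.2 S.hm
  have := S.hdelta0
  refine (Real.log_le_log (by positivity) ?_).trans h.log_initNoise_le
  have hm : (S.m : ℝ) ≤ S.N * S.m * S.P := by
    exact_mod_cast (Nat.le_mul_of_pos_left _ S.hN).trans (Nat.le_mul_of_pos_right _ S.hP)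
  exact div_le_div_of_nonneg_right (by linarith) S.hdelta0.le

lemma log_noisePair_le (h : S.CondH C) :
    Real.log ((16 : ℝ) * S.N ^ 2 * S.P ^ 2 / S.delta) ≤ 6 * Real.log S.unionRatio := by
  have hδ := S.hdelta0
  have hN : (0 : ℝ) < S.N := Nat.cast_pos.2 S.hN
  have hP : (0 : ℝ) < S.P := Nat.cast_pos.2 S.hP
  have hNP : ((S.N * S.P : ℕ) : ℝ) / S.delta ≤ S.unionRatio :=
    natCast_div_delta_le_unionRatio (le_trans (Nat.mul_le_mul_right _
      (Nat.le_mul_of_pos_right _ S.hm)) h.mul_le_T_mul)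
  have hsq : (S.N : ℝ) ^ 2 * S.P ^ 2 / S.delta ≤ S.unionRatio ^ 2 := calc
    (S.N : ℝ) ^ 2 * S.P ^ 2 / S.delta ≤ S.N ^ 2 * S.P ^ 2 / S.delta ^ 2 := by
        gcongr
        exact pow_le_of_le_one hδ.le S.hdelta1.le two_ne_zero
    _ = (((S.N * S.P : ℕ) : ℝ) / S.delta) ^ 2 := by push_cast; ring
    _ ≤ _ := by gcongr
  have hle := h.log_sixteen_mul_le (by positivity) hsq
  convert hle using 2 <;> push_cast <;> ring

lemma eta_mul_alpha_sq_le (h : S.CondH C) :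
    S.eta * S.alpha ^ 2 * Real.log S.unionRatio ≤ C⁻¹ :=
  mul_mul_le_of_le_mul_div (inv_nonneg.2 h.const_pos.le) (pow_pos S.halpha 2)
    (one_half_pos.trans_le h.half_le_log_unionRatio) le_rfl (min_le_right _ _) h.2.2.2.2.2.1

lemma eta_mul_noise_le (h : S.CondH C) :
    S.eta * (S.sigman ^ 2 * S.d) * Real.log S.unionRatio ≤ C⁻¹ :=
  mul_mul_le_of_le_mul_div (inv_nonneg.2 h.const_pos.le)
    (mul_pos (pow_pos S.hsigman 2) (Nat.cast_pos.2 S.hd))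
    (one_half_pos.trans_le h.half_le_log_unionRatio) le_rfl
    ((min_le_left _ _).trans (min_le_right _ _)) h.2.2.2.2.2.1

lemma sigma0_mul_signal_le (h : S.CondH C) :
    S.sigma0 * (S.alpha * (S.m : ℝ) ^ ((2 : ℝ) / 3)) * Real.log S.unionRatio ≤ C⁻¹ := by
  have := S.halpha
  have : (0 : ℝ) < S.m := Nat.cast_pos.2 S.hm
  exact mul_mul_le_of_le_mul_div (inv_nonneg.2 h.const_pos.le) (by positivity)
    (one_half_pos.trans_le h.half_le_log_unionRatio) h.log_unionRatio_le
    ((min_le_left _ _).trans (min_le_right _ _)) h.2.2.2.2.1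

lemma sigma0_mul_noise_le (h : S.CondH C) :
    S.sigma0 * ((S.m : ℝ) ^ ((2 : ℝ) / 3) * (S.P : ℝ) ^ ((2 : ℝ) / 3) * S.sigman * √S.d) *
      Real.log S.unionRatio ≤ C⁻¹ := by
  have := S.hsigman
  have : (0 : ℝ) < S.m := Nat.cast_pos.2 S.hm
  have : (0 : ℝ) < S.P := Nat.cast_pos.2 S.hP
  have : (0 : ℝ) < S.d := Nat.cast_pos.2 S.hd
  exact mul_mul_le_of_le_mul_div (inv_nonneg.2 h.const_pos.le) (by positivity)
    (one_half_pos.trans_le h.half_le_log_unionRatio) h.log_unionRatio_le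
    ((min_le_left _ _).trans (min_le_left _ _)) h.2.2.2.2.1

lemma sqrt_mul_le_sqrt_d (h : S.CondH C) :
    √C * S.m * S.P * S.N * Real.log S.unionRatio ^ 2 ≤ √S.d := by
  refine Real.le_sqrt_of_sq_le (le_of_eq_of_le ?_ h.2.2.1)
  simp only [mul_pow, Real.sq_sqrt h.const_pos.le, unionRatio]
  ring

lemma eps_le (h : S.CondH C) : S.eps ≤ C⁻¹ * S.alpha := by
  refine h.2.2.2.2.2.2.2.1.le.trans ?_
  gcongr
  · exact inv_nonneg.2 h.const_pos.le
  · exact min_le_left _ _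

lemma le_two_of_mul_log_unionRatio_le (h : S.CondH C) {x : ℝ}
    (hx : x * Real.log S.unionRatio ≤ C⁻¹) : x ≤ 2 := by
  have hlog := h.half_le_log_unionRatio
  by_contra! hlt
  nlinarith [inv_le_one_of_one_le₀ h.1]

lemma sigma0_mul_sigman_mul_sqrt_d_le (h : S.CondH C) : S.sigma0 * S.sigman * √S.d ≤ 2 := by
  have := S.hsigma0
  have := S.hsigman
  have hm : 1 ≤ (S.m : ℝ) ^ ((2 : ℝ) / 3) :=
    Real.one_le_rpow (Nat.one_le_cast.2 S.hm) (by norm_num)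
  have hP : 1 ≤ (S.P : ℝ) ^ ((2 : ℝ) / 3) :=
    Real.one_le_rpow (Nat.one_le_cast.2 S.hP) (by norm_num)
  calc S.sigma0 * S.sigman * √S.d = S.sigma0 * (1 * 1 * S.sigman * √S.d) := by ring
    _ ≤ S.sigma0 * ((S.m : ℝ) ^ ((2 : ℝ) / 3) * (S.P : ℝ) ^ ((2 : ℝ) / 3) * S.sigman * √S.d) := by
        gcongr
    _ ≤ 2 := h.le_two_of_mul_log_unionRatio_le h.sigma0_mul_noise_le

lemma one_le_log_T (hC : 12 ≤ C) (h : S.CondH C) : 1 ≤ Real.log S.T := by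
  have := S.heta
  have := S.hsigma0
  have := S.hsigman
  have hN : (1 : ℝ) ≤ S.N := Nat.one_le_cast.2 S.hN
  have hd : (0 : ℝ) < S.d := Nat.cast_pos.2 S.hd
  have hdenom : S.eta * S.sigma0 * S.sigman ^ 3 * (S.d * √S.d) ≤ 4 := calc
    S.eta * S.sigma0 * S.sigman ^ 3 * (S.d * √S.d) =
        S.eta * (S.sigman ^ 2 * S.d) * (S.sigma0 * S.sigman * √S.d) := by ring
    _ ≤ 2 * 2 := by
        gcongr
        · exact h.le_two_of_mul_log_unionRatio_le h.eta_mul_noise_le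
        · exact h.sigma0_mul_sigman_mul_sqrt_d_le
    _ = 4 := by norm_num
  have hT : (3 : ℝ) ≤ S.T := by
    refine le_trans ?_ h.2.1
    rw [le_div_iff₀ (by positivity)]
    nlinarith
  rw [Real.le_log_iff_exp_le (by positivity)]
  exact Real.exp_one_lt_three.le.trans hT

lemma one_le_log_unionRatio (hC : 12 ≤ C) (h : S.CondH C) : 1 ≤ Real.log S.unionRatio :=
  (h.one_le_log_T hC).trans h.log_T_le

lemma m_mul_initSignalBound_cube_le (hC : 12 ≤ C) (h : S.CondH C) :
    S.m * (S.initSignalBound * S.alpha) ^ 3 ≤ 1 := by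
  have hα := S.halpha
  have hσ := S.hsigma0
  have hlog := h.one_le_log_unionRatio hC
  have hsqrt : √(2 * Real.log ((16 : ℝ) * S.m / S.delta)) ≤ 4 * Real.log S.unionRatio :=
    sqrt_le_mul_of_le_sq_mul (by norm_num) hlog (by linarith [h.log_initSignal_le])
  have hCinv : C⁻¹ ≤ 1 / 4 := inv_le_of_inv_le₀ (by norm_num) (by linarith)
  unfold initSignalBound
  rw [← one_pow 3]
  refine mul_cube_le_of_rpow_mul_le (Nat.one_le_cast.2 S.hm) (by positivity) ?_
  calc (S.m : ℝ) ^ ((2 : ℝ) / 3) *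
        (S.sigma0 * √(2 * Real.log ((16 : ℝ) * S.m / S.delta)) * S.alpha)
      ≤ (S.m : ℝ) ^ ((2 : ℝ) / 3) * (S.sigma0 * (4 * Real.log S.unionRatio) * S.alpha) := by
        gcongr
    _ = 4 * (S.sigma0 * (S.alpha * (S.m : ℝ) ^ ((2 : ℝ) / 3)) * Real.log S.unionRatio) := by ring
    _ ≤ 1 := by linarith [h.sigma0_mul_signal_le]

lemma mul_initNoiseBound_cube_le (hC : 18 ≤ C) (h : S.CondH C) :
    S.m * S.P * S.initNoiseBound ^ 3 ≤ 1 / 4 := by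
  have hσ := S.hsigma0
  have hσn := S.hsigman
  have hlog := h.one_le_log_unionRatio (by linarith)
  have hsqrt : √(Real.log ((16 : ℝ) * S.N * S.m * S.P / S.delta)) ≤ 3 * Real.log S.unionRatio :=
    sqrt_le_mul_of_le_sq_mul (by norm_num) hlog (by linarith [h.log_initNoise_le])
  have hCinv : C⁻¹ ≤ 1 / 18 := inv_le_of_inv_le₀ (by norm_num) (by linarith)
  have hmP : (1 : ℝ) ≤ S.m * S.P := by exact_mod_cast Nat.mul_pos S.hm S.hP
  refine (mul_cube_le_of_rpow_mul_le (k := 1 / 2) hmP S.initNoiseBound_nonneg ?_).trans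
    (by norm_num)
  rw [initNoiseBound, Real.sqrt_mul S.d.cast_nonneg, Real.mul_rpow S.m.cast_nonneg S.P.cast_nonneg]
  calc (S.m : ℝ) ^ ((2 : ℝ) / 3) * (S.P : ℝ) ^ ((2 : ℝ) / 3) * (3 * S.sigma0 * S.sigman *
        (√S.d * √(Real.log ((16 : ℝ) * S.N * S.m * S.P / S.delta))))
      ≤ (S.m : ℝ) ^ ((2 : ℝ) / 3) * (S.P : ℝ) ^ ((2 : ℝ) / 3) * (3 * S.sigma0 * S.sigman *
        (√S.d * (3 * Real.log S.unionRatio))) := by gcongr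
    _ = 9 * (S.sigma0 * ((S.m : ℝ) ^ ((2 : ℝ) / 3) * (S.P : ℝ) ^ ((2 : ℝ) / 3) * S.sigman * √S.d) *
        Real.log S.unionRatio) := by ring
    _ ≤ 1 / 2 := by linarith [h.sigma0_mul_noise_le]

lemma memorizedNoiseBound_le (hC : 12 ≤ C) (h : S.CondH C) :
    S.memorizedNoiseBound ≤ 63 * Real.log S.T ^ ((1 : ℝ) / 3) / (√C * S.m) := by
  have hlog := h.one_le_log_unionRatio hC
  have hm : (0 : ℝ) < S.m := Nat.cast_pos.2 S.hm
  have hP : (0 : ℝ) < S.P := Nat.cast_pos.2 S.hP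
  have hN : (0 : ℝ) < S.N := Nat.cast_pos.2 S.hN
  have hsqrt : √(Real.log ((16 : ℝ) * S.N ^ 2 * S.P ^ 2 / S.delta)) ≤
      3 * Real.log S.unionRatio :=
    sqrt_le_mul_of_le_sq_mul (by norm_num) hlog (by linarith [h.log_noisePair_le])
  unfold memorizedNoiseBound
  calc 21 * S.pun * S.N * S.P * Real.log S.T ^ ((1 : ℝ) / 3) / √S.d *
        √(Real.log ((16 : ℝ) * S.N ^ 2 * S.P ^ 2 / S.delta))
      = 21 * (S.pun * S.N) * S.P * Real.log S.T ^ ((1 : ℝ) / 3) / √S.d *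
        √(Real.log ((16 : ℝ) * S.N ^ 2 * S.P ^ 2 / S.delta)) := by ring
    _ ≤ 21 * S.N * S.P * Real.log S.T ^ ((1 : ℝ) / 3) /
        (√C * S.m * S.P * S.N * Real.log S.unionRatio ^ 2) * (3 * Real.log S.unionRatio) := by
        gcongr
        · exact S.pun_mul_N_le
        · exact h.sqrt_mul_le_sqrt_d
    _ = 63 * Real.log S.T ^ ((1 : ℝ) / 3) / (√C * S.m) / Real.log S.unionRatio := by
        field_simp
        ring
    _ ≤ 63 * Real.log S.T ^ ((1 : ℝ) / 3) / (√C * S.m) := div_le_self (by positivity) hlog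

lemma mul_memorizedNoiseBound_cube_le (hC : 10 ^ 12 ≤ C) (h : S.CondH C) :
    S.m * S.P * S.memorizedNoiseBound ^ 3 ≤ Real.log S.T / 2 := by
  have hC0 := h.const_pos
  have hm : (1 : ℝ) ≤ S.m := Nat.one_le_cast.2 S.hm
  have hlogT := Real.log_natCast_nonneg S.T
  have hR : 10 ^ 6 ≤ √C := Real.le_sqrt_of_sq_le (by linarith)
  have hPC : S.P / √C ^ 2 ≤ 1 := by
    rw [Real.sq_sqrt hC0.le]
    exact (div_le_one hC0).2 h.P_le
  calc S.m * S.P * S.memorizedNoiseBound ^ 3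
      ≤ S.m * S.P * (63 * Real.log S.T ^ ((1 : ℝ) / 3) / (√C * S.m)) ^ 3 := by
        have := S.memorizedNoiseBound_nonneg
        gcongr
        exact h.memorizedNoiseBound_le (by linarith)
    _ = 63 ^ 3 * Real.log S.T * (S.P / √C ^ 2) / (√C * S.m ^ 2) := by
        rw [div_pow, mul_pow, rpow_one_third_cube hlogT]
        field_simp
    _ ≤ 63 ^ 3 * Real.log S.T * 1 / (10 ^ 6 * 1 ^ 2) := by gcongr
    _ ≤ Real.log S.T / 2 := by linarith

lemma mul_noiseBound_cube_le (hC : 10 ^ 12 ≤ C) (h : S.CondH C) :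
    S.m * S.P * (S.initNoiseBound + S.memorizedNoiseBound) ^ 3 ≤ 3 * Real.log S.T := by
  calc (S.m : ℝ) * S.P * (S.initNoiseBound + S.memorizedNoiseBound) ^ 3
      ≤ S.m * S.P * (2 ^ (3 - 1) * (S.initNoiseBound ^ 3 + S.memorizedNoiseBound ^ 3)) := by
        gcongr
        exact add_pow_le S.initNoiseBound_nonneg S.memorizedNoiseBound_nonneg 3
    _ = 4 * (S.m * S.P * S.initNoiseBound ^ 3 + S.m * S.P * S.memorizedNoiseBound ^ 3) := by ring
    _ ≤ 3 * Real.log S.T := by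
        linarith [h.mul_initNoiseBound_cube_le (by linarith), h.mul_memorizedNoiseBound_cube_le hC,
          h.one_le_log_T (by linarith)]

end CondH

end Setting

theorem stmt6_general {S : Setting} {C : ℝ} (hC : 10 ^ 12 ≤ C) (hdyn : S.ATDyn)
    (hinit : ∀ r, |dot (S.w 0 r) (e1 S.d S.hd)| ≤ S.initSignalBound) (h : S.CondH C)
    {t : ℕ} (ht : t ≤ S.T) (hNS : ∀ τ < t, S.NS τ) (r : Fin S.m) :
    S.wsig t r ≤ 3 * Real.log S.T ^ ((1 : ℝ) / 3) / S.alpha := by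
  have hα := S.halpha
  have hlog : 1 ≤ Real.log S.T := h.one_le_log_T (by linarith)
  have hcube : (Real.log S.T ^ ((1 : ℝ) / 3)) ^ 3 = Real.log S.T :=
    rpow_one_third_cube (zero_le_one.trans hlog)
  have hCinv : C⁻¹ ≤ 1 / 100 := inv_le_of_inv_le₀ (by norm_num) (by linarith)
  have hη : S.eta * S.alpha ^ 2 * Real.log S.T ^ ((1 : ℝ) / 3) ≤ 1 / 100 := calc
    _ ≤ S.eta * S.alpha ^ 2 * Real.log S.unionRatio := by
        have := S.heta
        gcongr
        exact (Real.rpow_le_self_of_one_le hlog (by norm_num)).trans h.log_T_le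
    _ ≤ 1 / 100 := h.eta_mul_alpha_sq_le.trans hCinv
  have hε : S.eps ≤ S.alpha / 10 := by nlinarith [h.eps_le]
  have hw0 : ∀ r, |S.wsig 0 r| ≤ S.initSignalBound := fun r => by
    rw [Setting.wsig, ← dot_e1 S.hd (S.w 0 r)]
    exact hinit r
  rw [mul_div_assoc]
  exact Setting.wsig_le_of_abs_noise_le hdyn (Real.one_le_rpow hlog (by norm_num)) hcube hη hε
    (h.m_mul_initSignalBound_cube_le (by linarith)) hw0
    (add_nonneg S.initNoiseBound_nonneg S.memorizedNoiseBound_nonneg)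
    (by rw [hcube]; exact h.mul_noiseBound_cube_le hC) ht hNS r

/-- Signal weight bound. On the event `E`, under Condition (H), if
the noise-stability bound holds at every iteration up to `t ≤ T`, then every signal
coordinate satisfies `w_{r,1}^{(t)} ≤ 3 (log T)^{1/3} / α`. -/
theorem stmt6 :
    ∃ C : ℝ, 0 < C ∧
      ∀ S : Setting, S.ATDyn → S.EventE → S.CondH C → (S.SU.Nonempty → S.SparseRegime C) →
        ∀ t, t ≤ S.T → (∀ τ, τ ≤ t → S.NS τ) →
          ∀ r, S.wsig t r ≤ 3 * Real.log S.T ^ ((1 : ℝ) / 3) / S.alpha :=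
  ⟨10 ^ 12, by norm_num, fun _ hdyn hE h _ _ ht hNS =>
    stmt6_general le_rfl hdyn hE.2.2.2.2.1 h ht fun τ hτ => hNS τ hτ.le⟩

end AD

end
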